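/- A coherent set of desirable gambles K ⊆ ℝ^n is maximal (i.e., no coherent set of desirable gambles strictly contains K) if and only if there exists a unique matrix A ∈ ℝ^{n×n} with orthonormal rows and all columns lexicographically positive (A >_L 0_n) such that K = {g ∈ ℝ^n : Ag >_L 0_n}. -/

import Mathlib

open Matrix BigOperators

/-- `g <_L f`: `g` is lexicographically less than `f`, i.e. at the first index where they
differ, `g` is smaller. -/
def LexLt {n : ℕ} (g f : Fin n → ℝ) : Prop :=
  ∃ k : Fin n, (∀ i : Fin n, i < k → g i = f i) ∧ g k < f k

/-- `g ≤_L f`: `g <_L f` or `g = f`. -/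
def LexLe {n : ℕ} (g f : Fin n → ℝ) : Prop := LexLt g f ∨ g = f

/-- `A >_L 0_n`: every column of `A` is lexicographically positive. -/
def ColsLexPos {n : ℕ} (A : Matrix (Fin n) (Fin n) ℝ) : Prop :=
  ∀ j : Fin n, LexLt 0 (fun i => A i j)

/-- A coherent set of desirable gambles on an `n`-element outcome space. -/
def CohDesirable {n : ℕ} (K : Set (Fin n → ℝ)) : Prop :=
  (∀ g ∈ K, ∀ f ∈ K, g + f ∈ K) ∧                      -- A1
  (∀ g ∈ K, ∀ l : ℝ, 0 < l → l • g ∈ K) ∧              -- A2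
  (∀ g : Fin n → ℝ, (∀ i, 0 ≤ g i) → g ≠ 0 → g ∈ K) ∧  -- A3
  (0 : Fin n → ℝ) ∉ K                                   -- A4

/-!
Adjoining a ray shows that a maximal blunt convex cone contains exactly one of `x`, `-x` for every
`x ≠ 0`. In finite dimension such a cone is supported at the origin by a hyperplane `uᗮ`, so it
contains the open half-space `⟪u, x⟫ > 0` and misses the opposite one; what remains is its trace on
`uᗮ`, again a maximal blunt cone, of one dimension less. Iterating produces an orthonormal family
in which the cone is the set of lexicographically positive vectors. Two such families agree, since
at the first index `i` where `b` and `c` differ both `b i - c i` and `c i - b i` would be in the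
cone. A coherent set of gambles is a blunt convex cone containing the positive vectors, a condition
inherited by every larger cone.
-/

open ConvexCone
open scoped InnerProductSpace Pointwise

section MaximalBlunt

variable {𝕜 M N : Type*} [Field 𝕜] [LinearOrder 𝕜] [IsStrictOrderedRing 𝕜]
  [AddCommGroup M] [Module 𝕜 M] [AddCommGroup N] [Module 𝕜 N] {C : ConvexCone 𝕜 M} {x : M}

/-- The convex cone generated by the convex cone `C` and the vector `x`. The vectors `l • x` are
listed separately because `C` need not contain `0`. -/
def adjoinRay (C : ConvexCone 𝕜 M) (x : M) : ConvexCone 𝕜 M where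
  carrier := {y | ∃ l : 𝕜, 0 ≤ l ∧ (y - l • x ∈ C ∨ 0 < l ∧ y = l • x)}
  smul_mem' := by
    rintro c hc y ⟨l, hl, hy | ⟨hl', rfl⟩⟩
    · exact ⟨c * l, by positivity, .inl <| by
        simpa only [smul_sub, mul_smul] using C.smul_mem hc hy⟩
    · exact ⟨c * l, by positivity, .inr ⟨by positivity, smul_smul c l x⟩⟩
  add_mem' := by
    rintro y ⟨l, hl, hy⟩ z ⟨m, hm, hz⟩
    refine ⟨l + m, by positivity, ?_⟩
    rcases hy with hy | ⟨hl', rfl⟩ <;> rcases hz with hz | ⟨hm', rfl⟩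
    · exact .inl (by convert C.add_mem hy hz using 1; module)
    · exact .inl (by convert hy using 1; module)
    · exact .inl (by convert hz using 1; module)
    · exact .inr ⟨by positivity, (add_smul l m x).symm⟩

theorem mem_adjoinRay_self (C : ConvexCone 𝕜 M) (x : M) : x ∈ adjoinRay C x :=
  ⟨1, zero_le_one, .inr ⟨one_pos, (one_smul 𝕜 x).symm⟩⟩

theorem le_adjoinRay (C : ConvexCone 𝕜 M) (x : M) : C ≤ adjoinRay C x :=
  fun y hy ↦ ⟨0, le_rfl, .inl (by simpa only [zero_smul, sub_zero] using hy)⟩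

theorem blunt_adjoinRay (hC : C.Blunt) (hx : x ≠ 0) (hneg : -x ∉ C) : (adjoinRay C x).Blunt := by
  rintro ⟨l, hl, hmem | ⟨hl', hzero⟩⟩
  · rcases hl.eq_or_lt with rfl | hl'
    · exact hC (by simpa only [zero_smul, sub_zero] using hmem)
    · rw [zero_sub, ← smul_neg] at hmem
      exact hneg ((C.smul_mem_iff hl').1 hmem)
  · exact smul_ne_zero hl'.ne' hx hzero.symm

theorem maximal_blunt_iff : Maximal Blunt C ↔ C.Blunt ∧ ∀ x ≠ 0, x ∈ C ∨ -x ∈ C := by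
  refine ⟨fun hC ↦ ⟨hC.prop, fun x hx ↦ ?_⟩,
    fun ⟨hblunt, htotal⟩ ↦ ⟨hblunt, fun D hD hCD x hx ↦ ?_⟩⟩
  · by_contra! ⟨hmem, hneg⟩
    exact hmem (hC.2 (blunt_adjoinRay hC.prop hx hneg) (le_adjoinRay C x) (mem_adjoinRay_self C x))
  · have hx0 : x ≠ 0 := ne_of_mem_of_not_mem hx hD
    exact (htotal x hx0).resolve_right fun hneg ↦ hD.salient x hx hx0 (hCD hneg)

theorem maximal_blunt_comap {C : ConvexCone 𝕜 N} (hC : Maximal Blunt C) {f : M →ₗ[𝕜] N}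
    (hf : Function.Injective f) : Maximal Blunt (C.comap f) := by
  obtain ⟨hblunt, htotal⟩ := maximal_blunt_iff.1 hC
  refine maximal_blunt_iff.2 ⟨fun h0 ↦ hblunt (by simpa using h0), fun x hx ↦ ?_⟩
  simpa using htotal (f x) ((map_ne_zero_iff f hf).2 hx)

theorem isReproducing_of_maximal_blunt [Nontrivial M] (hC : Maximal Blunt C) :
    C.IsReproducing := by
  have htotal := (maximal_blunt_iff.1 hC).2
  refine .of_univ_subset fun x _ ↦ ?_
  by_cases hx : x = 0
  · obtain ⟨y, hy⟩ : ∃ y, y ∈ C := by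
      obtain ⟨z, hz⟩ := exists_ne (0 : M)
      exact (htotal z hz).elim (⟨z, ·⟩) (⟨-z, ·⟩)
    exact ⟨y, hy, y, hy, by simp [hx]⟩
  · rcases htotal x hx with hmem | hneg
    · exact ⟨x + x, C.add_mem hmem hmem, x, hmem, add_sub_cancel_right x x⟩
    · exact ⟨-x, hneg, -x + -x, C.add_mem hneg hneg, by simp⟩

theorem mem_iff_pos_or_eq_zero_and_mem (hC : C.Blunt) {f : M →ₗ[𝕜] 𝕜}
    (hf : ∀ x, 0 < f x → x ∈ C) : x ∈ C ↔ 0 < f x ∨ f x = 0 ∧ x ∈ C := by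
  refine ⟨fun hx ↦ ?_, fun h ↦ h.elim (hf x) And.right⟩
  rcases lt_trichotomy (f x) 0 with hneg | hzero | hpos
  · have hx0 : x ≠ 0 := ne_of_mem_of_not_mem hx hC
    exact absurd (hf (-x) (by simpa using hneg)) (hC.salient x hx hx0)
  · exact .inr ⟨hzero, hx⟩
  · exact .inl hpos

end MaximalBlunt

section SupportingHyperplane

theorem interior_nonempty_of_isReproducing {V : Type*} [NormedAddCommGroup V] [NormedSpace ℝ V]
    [FiniteDimensional ℝ V] {C : ConvexCone ℝ V} (hC : C.IsReproducing) :
    (interior (C : Set V)).Nonempty := by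
  have hsub : (C : Set V) -ᵥ (C : Set V) = Set.univ := hC.sub_eq_univ
  have hne : (C : Set V).Nonempty := (Set.vsub_nonempty.1 (hsub ▸ Set.univ_nonempty)).1
  rw [C.convex.interior_nonempty_iff_affineSpan_eq_top,
    AffineSubspace.affineSpan_eq_top_iff_vectorSpan_eq_top_of_nonempty _ _ _ hne, vectorSpan_def,
    hsub, Submodule.span_univ]

theorem exists_dual_pos_imp_mem {V : Type*} [NormedAddCommGroup V] [NormedSpace ℝ V]
    [FiniteDimensional ℝ V] [Nontrivial V] {C : ConvexCone ℝ V} (hC : Maximal Blunt C) :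
    ∃ f : StrongDual ℝ V, f ≠ 0 ∧ ∀ x, 0 < f x → x ∈ C := by
  obtain ⟨f, hf0, hf⟩ := geometric_hahn_banach_of_nonempty_interior_point C.convex
    (fun h0 ↦ hC.prop (interior_subset h0))
    (interior_nonempty_of_isReproducing (isReproducing_of_maximal_blunt hC))
  refine ⟨-f, neg_ne_zero.2 hf0, fun x hx ↦ ?_⟩
  have hfx : f x < 0 := by simpa using hx
  have hx0 : x ≠ 0 := by
    rintro rfl
    simp at hfx
  refine ((maximal_blunt_iff.1 hC).2 x hx0).resolve_right fun hneg ↦ ?_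
  have : 0 ≤ f x := by simpa using hf (-x) hneg
  linarith

theorem exists_unit_inner_pos_imp_mem {V : Type*} [NormedAddCommGroup V] [InnerProductSpace ℝ V]
    [FiniteDimensional ℝ V] [Nontrivial V] {C : ConvexCone ℝ V} (hC : Maximal Blunt C) :
    ∃ u : V, ‖u‖ = 1 ∧ ∀ x, 0 < ⟪u, x⟫_ℝ → x ∈ C := by
  obtain ⟨f, hf0, hf⟩ := exists_dual_pos_imp_mem hC
  set v := (InnerProductSpace.toDual ℝ V).symm f
  have hv0 : v ≠ 0 := by simpa [v] using hf0
  refine ⟨‖v‖⁻¹ • v, norm_smul_inv_norm hv0, fun x hx ↦ hf x ?_⟩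
  rw [real_inner_smul_left, InnerProductSpace.toDual_symm_apply] at hx
  exact pos_of_mul_pos_right hx (by positivity)

end SupportingHyperplane

section LexPos

theorem lexLt_iff_toLex_lt {n : ℕ} {g f : Fin n → ℝ} : LexLt g f ↔ toLex g < toLex f :=
  Iff.rfl

theorem lexLt_zero_succ_iff {n : ℕ} {x : Fin (n + 1) → ℝ} :
    LexLt 0 x ↔ 0 < x 0 ∨ x 0 = 0 ∧ LexLt 0 (fun i ↦ x i.succ) := by
  simp [LexLt, Fin.exists_fin_succ, Fin.forall_fin_succ, and_assoc, eq_comm]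

/-- The cone of lexicographically positive vectors of `ℝⁿ`. -/
def lexPos (n : ℕ) : ConvexCone ℝ (Fin n → ℝ) where
  carrier := {x | LexLt 0 x}
  smul_mem' := fun c hc x ⟨k, hzero, hpos⟩ ↦
    ⟨k, fun i hi ↦ by simp [← hzero i hi], mul_pos hc hpos⟩
  add_mem' := fun x hx y hy ↦ add_pos (lexLt_iff_toLex_lt.1 hx) (lexLt_iff_toLex_lt.1 hy)

theorem maximal_blunt_lexPos (n : ℕ) : Maximal Blunt (lexPos n) := by
  refine maximal_blunt_iff.2 ⟨lt_irrefl (toLex (0 : Fin n → ℝ)), fun x hx ↦ ?_⟩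
  have hx' : toLex x ≠ 0 := hx
  exact hx'.lt_or_gt.symm.imp id neg_pos.2

end LexPos

section LexCone

variable {V : Type*} [NormedAddCommGroup V] [InnerProductSpace ℝ V] {n : ℕ}

/-- The cone of vectors whose coordinates `⟪b i, x⟫` form a lexicographically positive vector. -/
noncomputable def lexCone (b : Fin n → V) : ConvexCone ℝ V :=
  (lexPos n).comap (LinearMap.pi fun i ↦ innerₛₗ ℝ (b i))

theorem mem_lexCone {b : Fin n → V} {x : V} : x ∈ lexCone b ↔ LexLt 0 (fun i ↦ ⟪b i, x⟫_ℝ) :=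
  Iff.rfl

theorem mem_lexCone_cons {u x : V} {b : Fin n → V} :
    x ∈ lexCone (Fin.cons u b : Fin (n + 1) → V) ↔
      0 < ⟪u, x⟫_ℝ ∨ ⟪u, x⟫_ℝ = 0 ∧ x ∈ lexCone b := by
  simp only [mem_lexCone, lexLt_zero_succ_iff, Fin.cons_zero, Fin.cons_succ]

theorem blunt_lexCone (b : Fin n → V) : (lexCone b).Blunt := by
  rintro ⟨k, -, hk⟩
  simp at hk

theorem maximal_blunt_lexCone {b : Fin n → V} (hb : Submodule.span ℝ (Set.range b) = ⊤) :
    Maximal Blunt (lexCone b) := by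
  refine maximal_blunt_comap (maximal_blunt_lexPos n)
    ((injective_iff_map_eq_zero _).2 fun x hx ↦ ?_)
  have hspan : Submodule.span ℝ (Set.range b) ≤ (ℝ ∙ x)ᗮ :=
    Submodule.span_le.2 <| Set.range_subset_iff.2 fun i ↦
      Submodule.mem_orthogonal_singleton_iff_inner_left.2 (congrFun hx i)
  have hxx : x ∈ (ℝ ∙ x)ᗮ := hspan (hb ▸ Submodule.mem_top)
  exact inner_self_eq_zero.1 (Submodule.mem_orthogonal_singleton_iff_inner_left.1 hxx)

theorem orthonormal_fin_cons {𝕜 E : Type*} [RCLike 𝕜] [SeminormedAddCommGroup E]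
    [InnerProductSpace 𝕜 E] {u : E} {b : Fin n → E} (hu : ‖u‖ = 1) (hub : ∀ i, inner 𝕜 u (b i) = 0)
    (hb : Orthonormal 𝕜 b) : Orthonormal 𝕜 (Fin.cons u b : Fin (n + 1) → E) := by
  refine ⟨Fin.cases hu hb.norm_eq_one, fun i j hij ↦ ?_⟩
  cases i using Fin.cases <;> cases j using Fin.cases
  · exact absurd rfl hij
  · exact hub _
  · exact inner_eq_zero_symm.1 (hub _)
  · exact hb.inner_eq_zero (by simpa using hij)

theorem exists_orthonormal_eq_lexCone [FiniteDimensional ℝ V] (hn : Module.finrank ℝ V = n)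
    {C : ConvexCone ℝ V} (hC : Maximal Blunt C) :
    ∃ b : Fin n → V, Orthonormal ℝ b ∧ C = lexCone b := by
  induction n generalizing V with
  | zero =>
    have : Subsingleton V := Module.finrank_zero_iff.1 hn
    exact ⟨Fin.elim0, ⟨Fin.rec0, Fin.rec0⟩, hC.eq_of_le (blunt_lexCone _) fun x hx ↦
      absurd (Subsingleton.elim x 0 ▸ hx) hC.prop⟩
  | succ n ih =>
    have : Nontrivial V := Module.nontrivial_of_finrank_eq_succ hn
    have : Fact (Module.finrank ℝ V = n + 1) := ⟨hn⟩
    obtain ⟨u, hu, huC⟩ := exists_unit_inner_pos_imp_mem hC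
    have hu0 : u ≠ 0 := norm_ne_zero_iff.1 (hu ▸ one_ne_zero)
    let W := (ℝ ∙ u)ᗮ
    obtain ⟨b, hb, hbC⟩ := ih (Submodule.finrank_orthogonal_span_singleton hu0)
      (maximal_blunt_comap hC W.subtype_injective)
    have mem_iff_of_inner_eq_zero {x : V} (hx : ⟪u, x⟫_ℝ = 0) :
        x ∈ C ↔ x ∈ lexCone (W.subtype ∘ b) :=
      SetLike.ext_iff.1 hbC ⟨x, Submodule.mem_orthogonal_singleton_iff_inner_right.2 hx⟩
    refine ⟨Fin.cons u (W.subtype ∘ b), orthonormal_fin_cons hu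
      (fun i ↦ Submodule.mem_orthogonal_singleton_iff_inner_right.1 (b i).2)
      (hb.comp_linearIsometry W.subtypeₗᵢ), ?_⟩
    ext x
    rw [mem_lexCone_cons, mem_iff_pos_or_eq_zero_and_mem (f := innerₛₗ ℝ u) hC.prop huC]
    exact or_congr_right (and_congr_right mem_iff_of_inner_eq_zero)

theorem sub_mem_lexCone {b c : Fin n → V} (hb : Orthonormal ℝ b) (hc : Orthonormal ℝ c) {i : Fin n}
    (heq : ∀ j < i, b j = c j) (hne : b i ≠ c i) : b i - c i ∈ lexCone b := by
  refine ⟨i, fun j hj ↦ ?_, ?_⟩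
  · have hbj : ⟪b j, b i⟫_ℝ = 0 := hb.inner_eq_zero hj.ne
    have hcj : ⟪b j, c i⟫_ℝ = 0 := heq j hj ▸ hc.inner_eq_zero hj.ne
    simp [inner_sub_right, hbj, hcj]
  · have hlt : ⟪b i, c i⟫_ℝ < 1 :=
      (inner_lt_one_iff_real_of_norm_eq_one (hb.norm_eq_one i) (hc.norm_eq_one i)).2 hne
    simpa [inner_sub_right, hb.norm_eq_one i] using hlt

theorem eq_of_lexCone_eq {b c : Fin n → V} (hb : Orthonormal ℝ b) (hc : Orthonormal ℝ c)
    (h : lexCone b = lexCone c) : b = c := by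
  funext i
  induction i using WellFoundedLT.induction with
  | ind i ih =>
  by_contra hne
  have hbc : b i - c i ∈ lexCone c := h ▸ sub_mem_lexCone hb hc ih hne
  have hcb : c i - b i ∈ lexCone c :=
    sub_mem_lexCone hc hb (fun j hj ↦ (ih j hj).symm) (Ne.symm hne)
  exact (blunt_lexCone c).salient _ hbc (sub_ne_zero.2 hne) (by rwa [neg_sub])

theorem maximal_blunt_iff_existsUnique_orthonormal [FiniteDimensional ℝ V]
    (hn : Module.finrank ℝ V = n) {C : ConvexCone ℝ V} :
    Maximal Blunt C ↔ ∃! b : Fin n → V, Orthonormal ℝ b ∧ C = lexCone b := by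
  refine ⟨fun hC ↦ ?_, ?_⟩
  · obtain ⟨b, hb, rfl⟩ := exists_orthonormal_eq_lexCone hn hC
    exact ⟨b, ⟨hb, rfl⟩, fun c ⟨hc, h⟩ ↦ eq_of_lexCone_eq hc hb h.symm⟩
  · rintro ⟨b, ⟨hb, rfl⟩, -⟩
    exact maximal_blunt_lexCone
      (hb.linearIndependent.span_eq_top_of_card_eq_finrank' (by rw [Fintype.card_fin, hn]))

end LexCone

section EuclideanRows

variable {m n : Type*}

/-- The rows of a real matrix as vectors of Euclidean space. -/
def euclideanRows (A : Matrix m n ℝ) (i : m) : EuclideanSpace ℝ n :=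
  WithLp.toLp 2 (A i)

theorem euclideanRows_bijective :
    Function.Bijective (euclideanRows : Matrix m n ℝ → m → EuclideanSpace ℝ n) :=
  (Equiv.piCongrRight fun _ ↦ (WithLp.equiv 2 (n → ℝ)).symm).bijective

theorem inner_euclideanRows [Fintype n] (A : Matrix m n ℝ) (i : m) (x : EuclideanSpace ℝ n) :
    ⟪euclideanRows A i, x⟫_ℝ = (A *ᵥ x.ofLp) i := by
  simp [euclideanRows, PiLp.inner_apply, mulVec, dotProduct, mul_comm]

theorem orthonormal_euclideanRows_iff [Fintype n] [DecidableEq m] {A : Matrix m n ℝ} :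
    Orthonormal ℝ (euclideanRows A) ↔ A * Aᵀ = 1 := by
  simp only [orthonormal_iff_ite, ← Matrix.ext_iff, one_apply, inner_euclideanRows]
  rfl

theorem mem_lexCone_euclideanRows [Fintype n] {k : ℕ} {A : Matrix (Fin k) n ℝ}
    {x : EuclideanSpace ℝ n} : x ∈ lexCone (euclideanRows A) ↔ LexLt 0 (A *ᵥ x.ofLp) := by
  simp only [mem_lexCone, inner_euclideanRows]

end EuclideanRows

namespace CohDesirable

variable {n : ℕ} {K : Set (Fin n → ℝ)}

/-- A coherent set of gambles as a convex cone in Euclidean space, where orthonormality of the rows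
of a matrix makes sense. -/
def cone (hK : CohDesirable K) : ConvexCone ℝ (EuclideanSpace ℝ (Fin n)) where
  carrier := WithLp.ofLp ⁻¹' K
  smul_mem' c hc g hg := hK.2.1 g.ofLp hg c hc
  add_mem' g hg f hf := hK.1 g.ofLp hg f.ofLp hf

theorem blunt_cone (hK : CohDesirable K) : hK.cone.Blunt :=
  hK.2.2.2

theorem of_cone_le (hK : CohDesirable K) {C : ConvexCone ℝ (EuclideanSpace ℝ (Fin n))}
    (hC : C.Blunt) (hle : hK.cone ≤ C) : CohDesirable ({g | WithLp.toLp 2 g ∈ C}) :=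
  ⟨fun _ hg _ hf ↦ C.add_mem hg hf, fun _ hg _ hl ↦ C.smul_mem hl hg,
    fun g hg hg0 ↦ hle (hK.2.2.1 g hg hg0), hC⟩

theorem forall_not_ssubset_iff_maximal_blunt (hK : CohDesirable K) :
    (∀ K' : Set (Fin n → ℝ), CohDesirable K' → ¬ K ⊂ K') ↔ Maximal Blunt hK.cone := by
  refine ⟨fun hmax ↦ ⟨hK.blunt_cone, fun C hC hle x hx ↦ ?_⟩, fun hmax K' hK' hss ↦ ?_⟩
  · by_contra hxK
    exact hmax _ (hK.of_cone_le hC hle) ⟨fun g hg ↦ hle hg, fun hsub ↦ hxK (hsub hx)⟩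
  · have hle : hK'.cone ≤ hK.cone := hmax.2 hK'.blunt_cone fun x hx ↦ hss.1 hx
    exact hss.2 fun g hg ↦ hle (x := WithLp.toLp 2 g) hg

theorem cone_eq_lexCone_euclideanRows_iff (hK : CohDesirable K) {A : Matrix (Fin n) (Fin n) ℝ} :
    hK.cone = lexCone (euclideanRows A) ↔ K = {g | LexLt 0 (A *ᵥ g)} := by
  rw [SetLike.ext_iff, Set.ext_iff]
  exact (WithLp.equiv 2 (Fin n → ℝ)).forall_congr fun x ↦ iff_congr Iff.rfl
    mem_lexCone_euclideanRows

theorem colsLexPos (hK : CohDesirable K) {A : Matrix (Fin n) (Fin n) ℝ}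
    (hA : K = {g | LexLt 0 (A *ᵥ g)}) : ColsLexPos A := by
  intro j
  have hnonneg : 0 ≤ (Pi.single j 1 : Fin n → ℝ) := Pi.single_nonneg.2 zero_le_one
  have hmem : Pi.single j 1 ∈ K := hK.2.2.1 _ hnonneg (Pi.single_ne_zero_iff.2 one_ne_zero)
  have hlex : LexLt 0 (A *ᵥ Pi.single j 1) := by rwa [hA] at hmem
  rwa [mulVec_single_one] at hlex

end CohDesirable

/-- A coherent set of desirable gambles is maximal iff it is the semispace determined by a
unique orthonormal matrix with lexicographically positive columns. -/
theorem desirable_maximal_iff {n : ℕ} (K : Set (Fin n → ℝ)) (hK : CohDesirable K) :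
    (∀ K' : Set (Fin n → ℝ), CohDesirable K' → ¬ K ⊂ K') ↔
      ∃! A : Matrix (Fin n) (Fin n) ℝ, A * Aᵀ = 1 ∧ ColsLexPos A ∧
        K = {g : Fin n → ℝ | LexLt 0 (A.mulVec g)} := by
  rw [hK.forall_not_ssubset_iff_maximal_blunt,
    maximal_blunt_iff_existsUnique_orthonormal finrank_euclideanSpace_fin,
    euclideanRows_bijective.existsUnique_iff]
  refine existsUnique_congr fun A ↦ ?_
  rw [orthonormal_euclideanRows_iff, hK.cone_eq_lexCone_euclideanRows_iff]
  exact and_congr_right fun _ ↦ (and_iff_right_of_imp hK.colsLexPos).symm
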